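/- For every n ≥ 9, the graph Gₙ is not an IP-SEG graph. -/

import Mathlib

/-- A segment between the horizontal lines `L₁ = {y = 1}` and `L₂ = {y = 2}`,
given by its two endpoints, each of which lies on `L₁` or `L₂`. -/
structure IPSeg where
  p : ℝ × ℝ
  q : ℝ × ℝ
  hp : p.2 = 1 ∨ p.2 = 2
  hq : q.2 = 1 ∨ q.2 = 2

namespace IPSeg

/-- The closed line segment in `ℝ²` determined by the two endpoints. -/
def carrier (s : IPSeg) : Set (ℝ × ℝ) := segment ℝ s.p s.q

/-- An interval segment: both endpoints on the same horizontal line. -/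
def IsInterval (s : IPSeg) : Prop := s.p.2 = s.q.2

/-- A permutation segment: one endpoint on each horizontal line. -/
def IsPermutation (s : IPSeg) : Prop := s.p.2 ≠ s.q.2

/-- The (set of) endpoints of the segment. -/
def endpoints (s : IPSeg) : Set (ℝ × ℝ) := {s.p, s.q}

end IPSeg

/-- An IP-SEG model of a graph: distinct vertices are adjacent iff their segments meet. -/
def IsIPSEGModel {V : Type*} (G : SimpleGraph V) (s : V → IPSeg) : Prop :=
  ∀ u v : V, u ≠ v → (G.Adj u v ↔ ((s u).carrier ∩ (s v).carrier).Nonempty)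

/-- An IP-SEG* model: an IP-SEG model in which all interval segments lie on one line. -/
def IsIPSEGStarModel {V : Type*} (G : SimpleGraph V) (s : V → IPSeg) : Prop :=
  IsIPSEGModel G s ∧
    ∃ c : ℝ, (c = 1 ∨ c = 2) ∧ ∀ v : V, (s v).IsInterval → (s v).p.2 = c

/-- The graph `Gₙ` on `3n` vertices: a chordless cycle on the vertices `(i, 0)`
(`i ∈ ZMod n`), together with a pendant vertex `(i, 1)` attached to `(i, 0)` and a
pendant vertex `(i, 2)` attached to `(i, 1)`, for each `i`. -/
def GGraph (n : ℕ) : SimpleGraph (ZMod n × Fin 3) :=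
  SimpleGraph.fromRel (fun x y =>
    (x.2 = 0 ∧ y.2 = 0 ∧ y.1 = x.1 + 1) ∨
    (x.2 = 0 ∧ y.2 = 1 ∧ y.1 = x.1) ∨
    (x.2 = 1 ∧ y.2 = 2 ∧ y.1 = x.1))

/-!
A permutation segment separates the strip between `L₁` and `L₂`, and a walk whose segments all miss
it stays on one side. Among three pairwise disjoint permutation segments the middle one separates
the other two, so they cannot represent an asteroidal triple. In `Gₙ`, any three vertices at
distinct and pairwise non-consecutive cycle positions form an asteroidal triple.

On the other hand, permutation segments are forced to be frequent. If an interval segment meets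
three pairwise disjoint interval segments, then one of these contains neither of its endpoints, so
it lies inside and meets nothing that the first segment misses. Applied to `vᵢ` and its neighbours
`wᵢ`, `vᵢ₋₁`, `vᵢ₊₁`, this gives a permutation segment at one of any three consecutive positions;
for `n ≥ 9`, three positions carrying one are pairwise non-consecutive.
-/

theorem left_or_right_mem_of_ordConnected {α : Type*} [LinearOrder α] {I : Set α}
    (hI : I.OrdConnected) {a b : α} (hmeet : (Set.uIcc a b ∩ I).Nonempty)
    (hsub : ¬ I ⊆ Set.uIcc a b) : a ∈ I ∨ b ∈ I := by
  wlog hab : a ≤ b generalizing a b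
  · rw [Set.uIcc_comm] at hmeet hsub
    exact (this hmeet hsub (le_of_not_ge hab)).symm
  obtain ⟨y, hyI, hy⟩ := Set.not_subset.1 hsub
  rw [Set.uIcc_of_le hab] at hmeet hy
  obtain ⟨x, ⟨hax, hxb⟩, hxI⟩ := hmeet
  rcases lt_or_ge y a with hya | hay
  · exact Or.inl (hI.out hyI hxI ⟨hya.le, hax⟩)
  · have hby : b < y := lt_of_not_ge fun hyb => hy ⟨hay, hyb⟩
    exact Or.inr (hI.out hxI hyI ⟨hxb, hby.le⟩)

namespace IPSeg

section Permutation

variable {s t u : IPSeg}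

/-- The first coordinate of the point at height `y` on the line through a permutation segment.
For an interval segment the division by zero makes the value meaningless. -/
noncomputable def abscissa (s : IPSeg) (y : ℝ) : ℝ :=
  s.p.1 + (y - s.p.2) / (s.q.2 - s.p.2) * (s.q.1 - s.p.1)

/-- Every point of `t` lies strictly to the right of the line through the permutation
segment `s`. -/
def LeftOf (s t : IPSeg) : Prop := ∀ x ∈ t.carrier, s.abscissa x.2 < x.1

theorem continuous_abscissa (s : IPSeg) : Continuous s.abscissa := by
  unfold abscissa
  fun_prop

theorem snd_mem_Icc {x : ℝ × ℝ} (hx : x ∈ s.carrier) : x.2 ∈ Set.Icc (1 : ℝ) 2 := by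
  have endpoint_mem : ∀ {y : ℝ}, y = 1 ∨ y = 2 → y ∈ Set.Icc (1 : ℝ) 2 := by
    rintro y (rfl | rfl) <;> norm_num
  exact ((convex_Icc (1 : ℝ) 2).linear_preimage (LinearMap.snd ℝ ℝ ℝ)).segment_subset
    (endpoint_mem s.hp) (endpoint_mem s.hq) hx

theorem IsPermutation.mem_carrier_iff (hs : s.IsPermutation) {x : ℝ × ℝ} :
    x ∈ s.carrier ↔ x.2 ∈ Set.Icc (1 : ℝ) 2 ∧ x.1 = s.abscissa x.2 := by
  have hne : s.q.2 - s.p.2 ≠ 0 := sub_ne_zero.2 (Ne.symm hs)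
  refine ⟨fun hx => ⟨snd_mem_Icc hx, ?_⟩, fun ⟨⟨h1, h2⟩, hx⟩ => ?_⟩
  · rw [carrier, segment_eq_image'] at hx
    obtain ⟨θ, -, rfl⟩ := hx
    simp [abscissa, hne]
  · rw [carrier, segment_eq_image']
    have hparam : (x.2 - s.p.2) / (s.q.2 - s.p.2) ∈ Set.Icc (0 : ℝ) 1 := by
      rcases s.hp with hp | hp <;> rcases s.hq with hq | hq
      · exact absurd (hp.trans hq.symm) hs
      · constructor <;> norm_num [hp, hq] <;> linarith
      · constructor <;> norm_num [hp, hq] <;> linarith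
      · exact absurd (hp.trans hq.symm) hs
    exact ⟨_, hparam, Prod.ext hx.symm (by simp [hne])⟩

theorem IsPermutation.leftOf_of_abscissa_lt (hs : s.IsPermutation)
    (hst : Disjoint s.carrier t.carrier) {x : ℝ × ℝ} (hx : x ∈ t.carrier)
    (hlt : s.abscissa x.2 < x.1) : s.LeftOf t := by
  intro y hy
  by_contra! hle
  obtain ⟨z, hz, hzs⟩ := (convex_segment t.p t.q).isPreconnected.intermediate_value₂ hy hx
    continuous_fst.continuousOn (s.continuous_abscissa.comp continuous_snd).continuousOn
    hle hlt.le
  exact Set.disjoint_left.1 hst (hs.mem_carrier_iff.2 ⟨snd_mem_Icc hz, hzs⟩) hz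

theorem IsPermutation.leftOf_congr (hs : s.IsPermutation) (hst : Disjoint s.carrier t.carrier)
    (hsu : Disjoint s.carrier u.carrier) (htu : (t.carrier ∩ u.carrier).Nonempty) :
    s.LeftOf t ↔ s.LeftOf u := by
  obtain ⟨x, hxt, hxu⟩ := htu
  exact ⟨fun h => hs.leftOf_of_abscissa_lt hsu hxu (h x hxt),
    fun h => hs.leftOf_of_abscissa_lt hst hxt (h x hxu)⟩

theorem IsPermutation.abscissa_one_mem (hs : s.IsPermutation) :
    (s.abscissa 1, (1 : ℝ)) ∈ s.carrier :=
  hs.mem_carrier_iff.2 ⟨by norm_num, rfl⟩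

theorem IsPermutation.leftOf_iff_abscissa_one_lt (hs : s.IsPermutation) (ht : t.IsPermutation)
    (hst : Disjoint s.carrier t.carrier) : s.LeftOf t ↔ s.abscissa 1 < t.abscissa 1 :=
  ⟨fun h => h _ ht.abscissa_one_mem, hs.leftOf_of_abscissa_lt hst ht.abscissa_one_mem⟩

theorem IsPermutation.leftOf_iff_not_leftOf (hs : s.IsPermutation) (ht : t.IsPermutation)
    (hst : Disjoint s.carrier t.carrier) : s.LeftOf t ↔ ¬ t.LeftOf s := by
  have hne : s.abscissa 1 ≠ t.abscissa 1 := fun h =>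
    Set.disjoint_left.1 hst hs.abscissa_one_mem (h ▸ ht.abscissa_one_mem)
  rw [hs.leftOf_iff_abscissa_one_lt ht hst, ht.leftOf_iff_abscissa_one_lt hs hst.symm, not_lt]
  exact ⟨le_of_lt, fun h => h.lt_of_ne hne⟩

end Permutation

section Interval

variable {s t : IPSeg}

theorem IsInterval.carrier_eq (hs : s.IsInterval) :
    s.carrier = Set.uIcc s.p.1 s.q.1 ×ˢ {s.p.2} := by
  have hq : s.q = (s.q.1, s.p.2) := Prod.ext rfl (Eq.symm hs)
  calc s.carrier = segment ℝ (s.p.1, s.p.2) (s.q.1, s.p.2) := by rw [← hq]; rfl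
    _ = _ := by rw [← Prod.image_mk_segment_left, segment_eq_uIcc, Set.prod_singleton]

theorem IsInterval.exists_endpoint_mem (hs : s.IsInterval) (ht : t.IsInterval)
    (hmeet : (s.carrier ∩ t.carrier).Nonempty) (hsub : ¬ t.carrier ⊆ s.carrier) :
    ∃ e ∈ s.endpoints, e ∈ t.carrier := by
  have hq : s.q.2 = s.p.2 := Eq.symm hs
  rw [hs.carrier_eq, ht.carrier_eq, Set.prod_inter_prod, Set.prod_nonempty_iff] at hmeet
  have hheight : t.p.2 = s.p.2 := by simpa [eq_comm] using hmeet.2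
  rw [hs.carrier_eq, ht.carrier_eq, hheight,
    Set.prod_subset_prod_iff_left (Set.singleton_nonempty _)] at hsub
  rcases left_or_right_mem_of_ordConnected Set.ordConnected_uIcc hmeet.1 hsub with h | h
  · exact ⟨s.p, by simp [endpoints], by simp [ht.carrier_eq, h, hheight]⟩
  · exact ⟨s.q, by simp [endpoints], by simp [ht.carrier_eq, h, hheight, hq]⟩

theorem IsInterval.card_le_two_of_not_subset {ι : Type*} {T : Finset ι} {t : ι → IPSeg}
    (hs : s.IsInterval) (ht : ∀ i ∈ T, (t i).IsInterval)
    (hmeet : ∀ i ∈ T, (s.carrier ∩ (t i).carrier).Nonempty)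
    (hsub : ∀ i ∈ T, ¬ (t i).carrier ⊆ s.carrier)
    (hdisj : (T : Set ι).PairwiseDisjoint fun i => (t i).carrier) : T.card ≤ 2 := by
  choose! e he het using fun i hi =>
    hs.exists_endpoint_mem (ht i hi) (hmeet i hi) (hsub i hi)
  calc T.card ≤ ({s.p, s.q} : Finset (ℝ × ℝ)).card :=
        Finset.card_le_card_of_injOn e (fun i hi => by simpa [endpoints] using he i hi)
          fun i hi j hj hij => hdisj.elim_set hi hj (e i) (het i hi) (hij ▸ het j hj)
    _ ≤ 2 := Finset.card_le_two

end Interval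

end IPSeg

section Asteroidal

variable {V : Type*} {G : SimpleGraph V} {u v w x : V}

/-- Some walk of `G` from `u` to `w` avoids the closed neighbourhood of `v`. The vertices outside
that neighbourhood are those adjacent to `v` in `Gᶜ`. -/
def ReachableAvoiding (G : SimpleGraph V) (v u w : V) : Prop :=
  ∃ p : G.Walk u w, ∀ y ∈ p.support, Gᶜ.Adj v y

/-- An asteroidal triple: any two of the three vertices are joined by a walk avoiding the closed
neighbourhood of the third. -/
structure IsAsteroidalTriple (G : SimpleGraph V) (u v w : V) : Prop where
  fst : ReachableAvoiding G u v w
  snd : ReachableAvoiding G v u w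
  thd : ReachableAvoiding G w u v

namespace ReachableAvoiding

theorem refl (hu : Gᶜ.Adj v u) : ReachableAvoiding G v u u :=
  ⟨.nil, by simpa using hu⟩

theorem of_adj (huw : G.Adj u w) (hu : Gᶜ.Adj v u) (hw : Gᶜ.Adj v w) :
    ReachableAvoiding G v u w :=
  ⟨huw.toWalk, by simpa using ⟨hu, hw⟩⟩

theorem symm : ReachableAvoiding G v u w → ReachableAvoiding G v w u := by
  rintro ⟨p, hp⟩
  exact ⟨p.reverse, by simpa using hp⟩

theorem trans : ReachableAvoiding G v u w → ReachableAvoiding G v w x →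
    ReachableAvoiding G v u x := by
  rintro ⟨p, hp⟩ ⟨q, hq⟩
  exact ⟨p.append q, fun y hy => ((p.mem_support_append_iff q).1 hy).elim (hp y) (hq y)⟩

theorem compl_adj_left : ReachableAvoiding G v u w → Gᶜ.Adj v u
  | ⟨p, hp⟩ => hp u p.start_mem_support

theorem compl_adj_right (h : ReachableAvoiding G v u w) : Gᶜ.Adj v w :=
  h.symm.compl_adj_left

end ReachableAvoiding

namespace IsIPSEGModel

variable {s : V → IPSeg}

theorem nonempty_inter (hs : IsIPSEGModel G s) (h : G.Adj u v) :
    ((s u).carrier ∩ (s v).carrier).Nonempty :=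
  (hs u v h.ne).1 h

theorem disjoint_carrier (hs : IsIPSEGModel G s) (h : Gᶜ.Adj u v) :
    Disjoint (s u).carrier (s v).carrier := by
  rw [SimpleGraph.compl_adj] at h
  rw [Set.disjoint_iff_inter_eq_empty, ← Set.not_nonempty_iff_eq_empty]
  exact mt (hs u v h.1).2 h.2

theorem leftOf_congr (hs : IsIPSEGModel G s) (hv : (s v).IsPermutation)
    (h : ReachableAvoiding G v u w) : (s v).LeftOf (s u) ↔ (s v).LeftOf (s w) := by
  obtain ⟨p, hp⟩ := h
  induction p with
  | nil => rfl
  | cons hadj p ih =>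
    simp only [SimpleGraph.Walk.support_cons, List.forall_mem_cons] at hp
    exact (hv.leftOf_congr (hs.disjoint_carrier hp.1)
      (hs.disjoint_carrier (hp.2 _ p.start_mem_support))
      (hs.nonempty_inter hadj)).trans (ih hp.2)

theorem not_isAsteroidalTriple (hs : IsIPSEGModel G s) (hu : (s u).IsPermutation)
    (hv : (s v).IsPermutation) (hw : (s w).IsPermutation) : ¬ IsAsteroidalTriple G u v w := by
  intro h
  have huv := hs.disjoint_carrier h.fst.compl_adj_left
  have huw := hs.disjoint_carrier h.fst.compl_adj_right
  have hvw := hs.disjoint_carrier h.snd.compl_adj_right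
  refine iff_not_self (a := (s u).LeftOf (s v)) ?_
  calc (s u).LeftOf (s v)
    _ ↔ (s u).LeftOf (s w) := hs.leftOf_congr hu h.fst
    _ ↔ ¬ (s w).LeftOf (s u) := hu.leftOf_iff_not_leftOf hw huw
    _ ↔ ¬ (s w).LeftOf (s v) := not_congr (hs.leftOf_congr hw h.thd)
    _ ↔ (s v).LeftOf (s w) := (hv.leftOf_iff_not_leftOf hw hvw).symm
    _ ↔ (s v).LeftOf (s u) := (hs.leftOf_congr hv h.snd).symm
    _ ↔ ¬ (s u).LeftOf (s v) := hv.leftOf_iff_not_leftOf hu huv.symm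

theorem not_carrier_subset (hs : IsIPSEGModel G s) (huw : G.Adj u w) (hvw : Gᶜ.Adj v w) :
    ¬ (s u).carrier ⊆ (s v).carrier := fun hsub =>
  Set.not_disjoint_iff_nonempty_inter.2 (hs.nonempty_inter huw)
    ((hs.disjoint_carrier hvw).mono_left hsub)

theorem isPermutation_or_exists_of_two_lt_card (hs : IsIPSEGModel G s) {N : Finset V}
    (hN : 2 < N.card) (hadj : ∀ x ∈ N, G.Adj v x) (hindep : Gᶜ.IsClique N)
    (hprivate : ∀ x ∈ N, ∃ y, G.Adj x y ∧ Gᶜ.Adj v y) :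
    (s v).IsPermutation ∨ ∃ x ∈ N, (s x).IsPermutation := by
  by_contra! ⟨hv, hx⟩
  refine hN.not_ge (IPSeg.IsInterval.card_le_two_of_not_subset (not_not.1 hv)
    (fun x hxN => not_not.1 (hx x hxN))
    (fun x hxN => hs.nonempty_inter (hadj x hxN)) (fun x hxN => ?_) fun x hxN y hyN hxy => ?_)
  · obtain ⟨y, hxy, hvy⟩ := hprivate x hxN
    exact hs.not_carrier_subset hxy hvy
  · exact hs.disjoint_carrier (hindep hxN hyN hxy)

end IsIPSEGModel

end Asteroidal

-- On a cycle of length `n ≥ 9`, `c ≤ a + 7` makes the step from `c` around to `a` at least two.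
theorem exists_separated_triple {P : ℕ → Prop} (hP : ∀ m, P m ∨ P (m + 1) ∨ P (m + 2))
    (h0 : P 0) :
    ∃ a b c, P a ∧ P b ∧ P c ∧ a + 2 ≤ b ∧ b + 2 ≤ c ∧ c ≤ a + 7 := by
  obtain ⟨c, hc, hc5, hc7⟩ : ∃ c, P c ∧ 5 ≤ c ∧ c ≤ 7 := by
    rcases hP 5 with h | h | h <;> exact ⟨_, h, by norm_num, by norm_num⟩
  by_cases h2 : P 2
  · exact ⟨0, 2, c, h0, h2, hc, by omega⟩
  by_cases h3 : P 3
  · exact ⟨0, 3, c, h0, h3, hc, by omega⟩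
  have h1 : P 1 := by simpa [h2, h3] using hP 1
  have h4 : P 4 := by simpa [h2, h3] using hP 2
  obtain h6 | h7 | h8 := hP 6
  · exact ⟨0, 4, 6, h0, h4, h6, by omega⟩
  · exact ⟨0, 4, 7, h0, h4, h7, by omega⟩
  · exact ⟨1, 4, 8, h1, h4, h8, by omega⟩

namespace GGraph

variable {n : ℕ} {i j k : ZMod n}

/-- The positions `i` and `j` are neither equal nor consecutive on the cycle: the step `d` leads
from `i` to `j`, and `2 ≤ d ≤ n - 2`. -/
def Far (i j : ZMod n) : Prop := ∃ d : ℕ, 2 ≤ d ∧ d + 2 ≤ n ∧ j = i + d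

theorem Far.symm : Far i j → Far j i := by
  rintro ⟨d, h2, hn, rfl⟩
  refine ⟨n - d, by omega, by omega, ?_⟩
  rw [Nat.cast_sub (by omega), ZMod.natCast_self]
  ring

theorem far_add_natCast (o : ZMod n) {a b : ℕ} (hab : a + 2 ≤ b) (hba : b + 2 ≤ n + a) :
    Far (o + (a : ZMod n)) (o + (b : ZMod n)) := by
  refine ⟨b - a, by omega, by omega, ?_⟩
  rw [Nat.cast_sub (by omega)]
  ring

theorem exists_far_triple (hn : 9 ≤ n) {K : Set (ZMod n)}
    (hK : ∀ i, i ∈ K ∨ i + 1 ∈ K ∨ i + 2 ∈ K) :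
    ∃ i ∈ K, ∃ j ∈ K, ∃ k ∈ K, Far i j ∧ Far j k ∧ Far i k := by
  obtain ⟨o, ho⟩ : ∃ o, o ∈ K := by
    rcases hK 0 with h | h | h <;> exact ⟨_, h⟩
  obtain ⟨a, b, c, ha, hb, hc, hab, hbc, hca⟩ :=
    exists_separated_triple (P := fun m => o + m ∈ K)
      (fun m => by simpa [add_assoc] using hK (o + m)) (by simpa using ho)
  exact ⟨_, ha, _, hb, _, hc, far_add_natCast o hab (by omega),
    far_add_natCast o hbc (by omega), far_add_natCast o (by omega) (by omega)⟩

theorem Far.ne_and_not_consecutive (h : Far i j) : i ≠ j ∧ j ≠ i + 1 ∧ i ≠ j + 1 := by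
  obtain ⟨d, h2, hn, rfl⟩ := h
  obtain ⟨e, rfl⟩ : ∃ e, d = e + 1 := ⟨d - 1, by omega⟩
  have cast_ne_zero : ∀ m : ℕ, 0 < m → m < n → (m : ZMod n) ≠ 0 := fun m hm hmn =>
    mt (ZMod.natCast_eq_zero_iff m n).1 (Nat.not_dvd_of_pos_of_lt hm hmn)
  refine ⟨fun h => cast_ne_zero (e + 1) (by omega) (by omega) ?_,
    fun h => cast_ne_zero e (by omega) (by omega) ?_,
    fun h => cast_ne_zero (e + 2) (by omega) (by omega) ?_⟩ <;> push_cast at h ⊢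
  · linear_combination -h
  · linear_combination h
  · linear_combination -h

theorem Far.compl_adj (h : Far i j) (a b : Fin 3) : (GGraph n)ᶜ.Adj (i, a) (j, b) := by
  obtain ⟨hne, hsucc, hpred⟩ := h.ne_and_not_consecutive
  simp [GGraph, hne, hne.symm, hsucc, hpred]

theorem adj_cycle (hn : 2 ≤ n) (i : ZMod n) : (GGraph n).Adj (i, 0) (i + 1, 0) := by
  have : Fact (1 < n) := ⟨hn⟩
  simp [GGraph]

theorem adj_zero_one (i : ZMod n) : (GGraph n).Adj (i, 0) (i, 1) := by
  simp [GGraph]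

theorem adj_one_two (i : ZMod n) : (GGraph n).Adj (i, 1) (i, 2) := by
  simp [GGraph]

theorem compl_adj_zero_two (i : ZMod n) : (GGraph n)ᶜ.Adj (i, 0) (i, 2) := by
  simp [GGraph]

theorem compl_adj_one_of_ne (hij : i ≠ j) (b : Fin 3) : (GGraph n)ᶜ.Adj (i, 1) (j, b) := by
  simp [GGraph, hij, hij.symm]

theorem Far.reachableAvoiding_zero (h : Far i j) (a b : Fin 3) :
    ReachableAvoiding (GGraph n) (i, a) (j, b) (j, 0) := by
  have h10 : ReachableAvoiding (GGraph n) (i, a) (j, 1) (j, 0) :=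
    .of_adj (adj_zero_one j).symm (h.compl_adj ..) (h.compl_adj ..)
  match b with
  | 0 => exact .refl (h.compl_adj ..)
  | 1 => exact h10
  | 2 => exact .trans (.of_adj (adj_one_two j).symm (h.compl_adj ..) (h.compl_adj ..)) h10

theorem Far.reachableAvoiding_add_two (h : Far i j) (a : Fin 3) :
    ReachableAvoiding (GGraph n) (i, a) (i + 2, 0) (j, 0) := by
  obtain ⟨d, h2, hn, rfl⟩ := h
  have compl_adj : ∀ e : ℕ, 2 ≤ e → e + 2 ≤ n → (GGraph n)ᶜ.Adj (i, a) (i + (e : ZMod n), 0) :=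
    fun e he hen => Far.compl_adj ⟨e, he, hen, rfl⟩ a 0
  induction d, h2 using Nat.le_induction with
  | base => exact .refl (compl_adj 2 le_rfl hn)
  | succ d hd ih =>
    refine (ih (by omega)).trans
      (.of_adj ?_ (compl_adj d hd (by omega)) (compl_adj _ (by omega) hn))
    simpa [add_assoc] using adj_cycle (by omega) (i + (d : ZMod n))

theorem Far.reachableAvoiding (hij : Far i j) (hik : Far i k) (a b c : Fin 3) :
    ReachableAvoiding (GGraph n) (i, a) (j, b) (k, c) :=
  (hij.reachableAvoiding_zero a b).trans <| (hij.reachableAvoiding_add_two a).symm.trans <|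
    (hik.reachableAvoiding_add_two a).trans (hik.reachableAvoiding_zero a c).symm

theorem isAsteroidalTriple_of_far (hij : Far i j) (hjk : Far j k) (hik : Far i k)
    (a b c : Fin 3) : IsAsteroidalTriple (GGraph n) (i, a) (j, b) (k, c) where
  fst := hij.reachableAvoiding hik a b c
  snd := hij.symm.reachableAvoiding hjk b a c
  thd := hik.symm.reachableAvoiding hjk.symm c a b

theorem exists_isPermutation_window (hn : 4 ≤ n) {s : ZMod n × Fin 3 → IPSeg}
    (hs : IsIPSEGModel (GGraph n) s) (i : ZMod n) :
    (∃ a, (s (i, a)).IsPermutation) ∨ (∃ a, (s (i + 1, a)).IsPermutation) ∨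
      ∃ a, (s (i + 2, a)).IsPermutation := by
  have hprev : i + 1 ≠ i := fun h => (adj_cycle (by omega) i).ne' (by rw [h])
  have hnext : i + 1 ≠ i + 2 := fun h => hprev (by linear_combination -h)
  have hfar : Far i (i + 2) := ⟨2, le_rfl, hn, by simp⟩
  have hsucc : (GGraph n).Adj (i + 1, 0) (i + 2, 0) := by
    have h := adj_cycle (by omega) (i + 1)
    rwa [add_assoc, one_add_one_eq_two] at h
  have hclique : (GGraph n)ᶜ.IsNClique 3 {(i + 1, 1), (i, 0), (i + 2, 0)} :=
    SimpleGraph.is3Clique_triple_iff.2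
      ⟨compl_adj_one_of_ne hprev 0, compl_adj_one_of_ne hnext 0, hfar.compl_adj 0 0⟩
  have hneighbor : ∀ x ∈ ({(i + 1, 1), (i, 0), (i + 2, 0)} : Finset (ZMod n × Fin 3)),
      (GGraph n).Adj (i + 1, 0) x := by
    simp only [Finset.forall_mem_insert, Finset.mem_singleton, forall_eq]
    exact ⟨adj_zero_one _, (adj_cycle (by omega) i).symm, hsucc⟩
  have hprivate : ∀ x ∈ ({(i + 1, 1), (i, 0), (i + 2, 0)} : Finset (ZMod n × Fin 3)),
      ∃ y, (GGraph n).Adj x y ∧ (GGraph n)ᶜ.Adj (i + 1, 0) y := by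
    simp only [Finset.forall_mem_insert, Finset.mem_singleton, forall_eq]
    exact ⟨⟨_, adj_one_two _, compl_adj_zero_two _⟩,
      ⟨_, adj_zero_one _, (compl_adj_one_of_ne hprev.symm 0).symm⟩,
      ⟨_, adj_zero_one _, (compl_adj_one_of_ne hnext.symm 0).symm⟩⟩
  have hpermutation := hs.isPermutation_or_exists_of_two_lt_card hclique.card_eq.ge hneighbor
    hclique.isClique hprivate
  simp only [Finset.mem_insert, Finset.mem_singleton, exists_eq_or_imp, exists_eq_left]
    at hpermutation
  rcases hpermutation with h | h | h | h
  · exact .inr (.inl ⟨0, h⟩)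
  · exact .inr (.inl ⟨1, h⟩)
  · exact .inl ⟨0, h⟩
  · exact .inr (.inr ⟨0, h⟩)

end GGraph

/-- For every `n ≥ 9`, the graph `Gₙ` is not an IP-SEG graph. -/
theorem Gn_not_ipseg (n : ℕ) (hn : 9 ≤ n) :
    ¬ ∃ s : ZMod n × Fin 3 → IPSeg, IsIPSEGModel (GGraph n) s := by
  rintro ⟨s, hs⟩
  obtain ⟨i, ⟨a, ha⟩, j, ⟨b, hb⟩, k, ⟨c, hc⟩, hij, hjk, hik⟩ :=
    GGraph.exists_far_triple hn (K := {i | ∃ a, (s (i, a)).IsPermutation})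
      (GGraph.exists_isPermutation_window (by omega) hs)
  exact hs.not_isAsteroidalTriple ha hb hc (GGraph.isAsteroidalTriple_of_far hij hjk hik a b c)
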